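/- arXiv:2511.23180 — 2 statements merged into one kernel-verified Lean document; each statement's English description precedes it below -/
import Mathlib

section
/- Let n be a natural number and let f : (Fin n → ℂ) × (Fin n → ℂ) → ℂ be entire (ℂ-differentiable at every point). Suppose f(z, z) = 0 for every z ∈ Fin n → ℂ. Then there exist entire functions g₁, …, gₙ : (Fin n → ℂ) × (Fin n → ℂ) → ℂ such that f(x, y) = Σᵢ (xᵢ − yᵢ) · gᵢ(x, y) for all x, y ∈ Fin n → ℂ. -/
open scoped BigOperators

/-! The fundamental theorem of calculus along the segment from `(y, y)` to `(x, y)` gives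
`f (x, y) - f (y, y) = ∑ i, (x i - y i) * ∫ t in 0..1, ∂f/∂xᵢ (y + t (x - y), y)`, and these integrals
serve as the quotients `g i`. They are entire because two operations preserve entire functions:

* integrating a family of entire functions that is jointly continuous in the parameter
  (`differentiable_integral_of_entire`); the domination needed to differentiate under the integral
  comes for free, since the Schwarz lemma bounds the derivative of an entire function by its values;
* taking a directional derivative (`differentiable_fderiv_apply_of_entire`), which by Cauchy's
  formula on complex lines is an integral of the previous kind. -/

/-- An integral over a compact interval of entire functions depending continuously on the parameter
is entire. No regularity of the derivative in the parameter is assumed: joint continuity gives a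
local bound on the functions, hence by the Schwarz lemma one on their derivatives. -/
theorem differentiable_integral_of_entire {E : Type*} [NormedAddCommGroup E] [NormedSpace ℂ E]
    [FiniteDimensional ℂ E] (F : ℝ → E → ℂ) (hc : Continuous (Function.uncurry F))
    (hd : ∀ t, Differentiable ℂ (F t)) (a b : ℝ) :
    Differentiable ℂ (fun x => ∫ t in a..b, F t x) := by
  intro x₀
  have : ProperSpace E := FiniteDimensional.proper ℂ E
  borelize E
  have hK : IsCompact (Set.uIcc a b ×ˢ Metric.closedBall x₀ 2) :=
    isCompact_uIcc.prod (isCompact_closedBall x₀ 2)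
  obtain ⟨M, hM⟩ := hK.exists_bound_of_continuousOn hc.continuousOn
  have hcont : ∀ x, Continuous (fun t => F t x) := fun x =>
    hc.comp (continuous_id.prodMk continuous_const)
  refine (intervalIntegral.hasFDerivAt_integral_of_dominated_of_fderiv_le
    (𝕜 := ℂ) (μ := MeasureTheory.volume) (F := fun x t => F t x)
    (F' := fun x t => fderiv ℂ (F t) x) (bound := fun _ => (M + M) / 1)
    (Metric.ball_mem_nhds x₀ one_pos) ?_ ?_ ?_ ?_ ?_ ?_).differentiableAt
  · exact Filter.Eventually.of_forall fun x => (hcont x).aestronglyMeasurable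
  · exact (hcont x₀).intervalIntegrable _ _
  · have h := (measurable_fderiv_with_param ℂ hc).comp
      (measurable_id.prodMk measurable_const : Measurable fun t : ℝ => (t, x₀))
    exact h.aestronglyMeasurable
  · refine Filter.Eventually.of_forall fun t ht x hx => ?_
    have ht' : t ∈ Set.uIcc a b := Set.uIoc_subset_uIcc ht
    have hsub : ∀ z ∈ Metric.ball x 1, ‖F t z‖ ≤ M := fun z hz => by
      refine hM (t, z) ⟨ht', ?_⟩
      have h1 := Metric.mem_ball.1 hx
      have h2 := Metric.mem_ball.1 hz
      have h3 := dist_triangle z x x₀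
      exact Metric.mem_closedBall.2 (by linarith)
    refine Complex.norm_fderiv_le_div_of_mapsTo_ball (hd t).differentiableOn ?_ one_pos
    intro z hz
    rw [mem_closedBall_iff_norm]
    exact (norm_sub_le _ _).trans
      (add_le_add (hsub z hz) (hsub x (Metric.mem_ball_self one_pos)))
  · exact intervalIntegrable_const
  · exact Filter.Eventually.of_forall fun t _ x _ => (hd t x).hasFDerivAt

theorem differentiable_fderiv_apply_of_entire {E : Type*} [NormedAddCommGroup E] [NormedSpace ℂ E]
    [FiniteDimensional ℂ E] {f : E → ℂ} (hf : Differentiable ℂ f) (v : E) :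
    Differentiable ℂ (fun p => fderiv ℂ f p v) := by
  -- Cauchy's formula for the derivative at `0` of `w ↦ f (p + w • v)`, on the unit circle.
  have key : ∀ p, fderiv ℂ f p v = (2 * Real.pi * Complex.I : ℂ)⁻¹ *
      ∫ θ in (0 : ℝ)..2 * Real.pi, deriv (circleMap 0 1) θ •
        ((1 / (circleMap 0 1 θ - 0) ^ 2) • f (p + circleMap 0 1 θ • v)) := by
    intro p
    have hline : Differentiable ℂ (fun w : ℂ => f (p + w • v)) := by fun_prop
    have h1 := DifferentiableOn.deriv_eq_smul_circleIntegral (c := (0 : ℂ)) one_pos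
      (hline.differentiableOn (s := Metric.closedBall 0 1))
    have h2 : deriv (fun w : ℂ => f (p + w • v)) 0 = fderiv ℂ f p v := by
      have hl : HasDerivAt (fun w : ℂ => p + w • v) v 0 := by
        simpa using ((hasDerivAt_id (0 : ℂ)).smul_const v).const_add p
      have hp : HasFDerivAt f (fderiv ℂ f p) (p + (0 : ℂ) • v) := by
        simpa using (hf p).hasFDerivAt
      exact (hp.comp_hasDerivAt (0 : ℂ) hl).deriv
    rw [circleIntegral, h2, smul_eq_mul] at h1
    rw [h1, inv_mul_cancel_left₀ Complex.two_pi_I_ne_zero]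
  rw [funext key]
  refine (differentiable_integral_of_entire _ ?_ ?_ _ _).const_mul _
  · have h0 : ∀ x : ℝ × E, (circleMap 0 1 x.1 - 0) ^ 2 ≠ 0 := fun x => by
      simp [circleMap_eq_center_iff]
    have hfc := hf.continuous
    have hcm : Continuous (circleMap 0 1) := continuous_circleMap 0 1
    simp only [deriv_circleMap, Function.uncurry_def]
    have : Continuous fun x : ℝ × E => 1 / (circleMap 0 1 x.1 - 0) ^ 2 :=
      continuous_const.div (by fun_prop) h0
    fun_prop
  · intro θ
    fun_prop

/-- Holomorphic division along the diagonal: if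
`f : ℂⁿ × ℂⁿ → ℂ` is entire and vanishes on the diagonal, then
`f (x, y) = ∑ i, (x i - y i) * g i (x, y)` for some entire functions `g i`. -/
theorem entire_vanishing_on_diagonal_divisible (n : ℕ)
    (f : (Fin n → ℂ) × (Fin n → ℂ) → ℂ)
    (hf : Differentiable ℂ f)
    (hdiag : ∀ z : Fin n → ℂ, f (z, z) = 0) :
    ∃ g : Fin n → ((Fin n → ℂ) × (Fin n → ℂ) → ℂ),
      (∀ i, Differentiable ℂ (g i)) ∧
      ∀ x y : Fin n → ℂ, f (x, y) = ∑ i, (x i - y i) * g i (x, y) := by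
  have hD : ∀ v, Differentiable ℂ (fun p => fderiv ℂ f p v) :=
    differentiable_fderiv_apply_of_entire hf
  refine ⟨fun i (p : (Fin n → ℂ) × (Fin n → ℂ)) => ∫ t in (0 : ℝ)..1,
    fderiv ℂ f (p.2 + (t : ℂ) • (p.1 - p.2), p.2) (Pi.single i 1, 0), fun i => ?_, fun x y => ?_⟩
  · refine differentiable_integral_of_entire (fun t (p : (Fin n → ℂ) × (Fin n → ℂ)) =>
      fderiv ℂ f (p.2 + (t : ℂ) • (p.1 - p.2), p.2) (Pi.single i 1, 0)) ?_ ?_ 0 1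
    · exact (hD (Pi.single i 1, 0)).continuous.comp
        (g := fun p => fderiv ℂ f p (Pi.single i 1, 0))
        (f := fun q : ℝ × ((Fin n → ℂ) × (Fin n → ℂ)) =>
          (q.2.2 + (q.1 : ℂ) • (q.2.1 - q.2.2), q.2.2)) (by fun_prop)
    · intro t
      exact (hD (Pi.single i 1, 0)).comp
        (g := fun p => fderiv ℂ f p (Pi.single i 1, 0))
        (f := fun q : (Fin n → ℂ) × (Fin n → ℂ) =>
          (q.2 + (t : ℂ) • (q.1 - q.2), q.2)) (by fun_prop)
  · have hcont : ∀ v, Continuous (fun t : ℝ => fderiv ℂ f (y + (t : ℂ) • (x - y), y) v) :=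
      fun v => (hD v).continuous.comp (g := fun p => fderiv ℂ f p v)
        (f := fun t : ℝ => (y + (t : ℂ) • (x - y), y)) (by fun_prop)
    have hftc : ∫ t in (0 : ℝ)..1, fderiv ℂ f (y + (t : ℂ) • (x - y), y) (x - y, 0)
        = f (x, y) := by
      rw [intervalIntegral.integral_eq_sub_of_hasDerivAt
        (f := fun t : ℝ => f (y + (t : ℂ) • (x - y), y)) ?_ ((hcont _).intervalIntegrable _ _)]
      · simp [hdiag]
      · intro t _
        have h1 : HasDerivAt (fun w : ℂ => y + w • (x - y)) (x - y) (t : ℂ) := by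
          simpa using ((hasDerivAt_id (t : ℂ)).smul_const (x - y)).const_add y
        have h2 := h1.prodMk (hasDerivAt_const (t : ℂ) y)
        exact ((hf _).hasFDerivAt.comp_hasDerivAt (t : ℂ) h2).comp_ofReal
    have hv : ((x - y, 0) : (Fin n → ℂ) × (Fin n → ℂ))
        = ∑ i, (x i - y i) • ((Pi.single i 1, 0) : (Fin n → ℂ) × (Fin n → ℂ)) := by
      ext j
      · simp [Prod.fst_sum, Finset.sum_apply, Pi.single_apply]
      · simp [Prod.snd_sum]
    rw [← hftc, hv]
    simp only [map_sum, map_smul, smul_eq_mul]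
    rw [intervalIntegral.integral_finsetSum
      fun i _ => ((hcont _).const_mul _).intervalIntegrable _ _]
    simp only [intervalIntegral.integral_const_mul]
end

section
/- Let n be a natural number and let φ be a ℂ-algebra homomorphism from the ring of entire functions on Fin n → ℂ to ℂ (no continuity assumed). Let w ∈ Fin n → ℂ be the point whose i-th coordinate is wᵢ = φ(prᵢ), where prᵢ denotes the i-th coordinate function. Then φ(f) = f(w) for every entire function f; that is, every character of the ring of entire functions on ℂⁿ is evaluation at a point of ℂⁿ. -/
/-!
Every entire `f` on `ℂⁿ` has a Hadamard decomposition
`f(z) = f(w) + ∑ i, (zᵢ - wᵢ) gᵢ(z)` with entire `gᵢ`. A character `φ` with `φ(prᵢ) = wᵢ` kills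
each `prᵢ - wᵢ`, so applying `φ` gives `φ(f) = f(w)`; no continuity of `φ` enters.

The functions are `gᵢ(z) = ∫₀¹ ∂ᵢf(w + t(z - w)) dt`, and the decomposition is the fundamental
theorem of calculus along the segment from `w` to `z`. That `∂ᵢf` and `gᵢ` are entire both follow
from `differentiable_parametric_integral`: integrating a jointly continuous family of entire
functions over a compact interval gives an entire function. For `∂ᵢf` it is applied to Cauchy's
formula for the derivative on the complex line through `z` in direction `eᵢ`.
-/

section

open Set Metric Complex MeasureTheory Topology Filter
open scoped Interval

/-- No continuity of the derivative in the parameter is assumed: the Schwarz lemma bounds the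
derivatives locally uniformly, and their measurability in `t` is automatic. -/
theorem differentiable_parametric_integral {E : Type*} [NormedAddCommGroup E] [NormedSpace ℂ E]
    [FiniteDimensional ℂ E] {F : E → ℝ → ℂ} (a b : ℝ) (hc : Continuous F.uncurry)
    (hd : ∀ t, Differentiable ℂ fun z => F z t) :
    Differentiable ℂ fun z => ∫ t in a..b, F z t := by
  intro x
  have : ProperSpace E := FiniteDimensional.proper ℂ E
  obtain ⟨M, hM⟩ : ∃ M : ℝ, ∀ p ∈ closedBall x 2 ×ˢ uIcc a b, ‖F.uncurry p‖ ≤ M :=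
    ((isCompact_closedBall x 2).prod isCompact_uIcc).exists_bound_of_continuousOn hc.continuousOn
  have hbound : ∀ t ∈ Ι a b, ∀ z ∈ ball x 1, ‖fderiv ℂ (fun z => F z t) z‖ ≤ 2 * M := by
    intro t ht z hz
    have hsub : ball z 1 ⊆ closedBall x 2 := fun y hy => by
      have := dist_triangle y z x
      rw [mem_ball] at hy hz
      rw [mem_closedBall]
      linarith
    have hMt : ∀ y ∈ ball z 1, ‖F y t‖ ≤ M := fun y hy =>
      hM (y, t) ⟨hsub hy, uIoc_subset_uIcc ht⟩
    have := norm_fderiv_le_div_of_mapsTo_ball (R₂ := 2 * M) (hd t).differentiableOn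
      (fun y hy => ?_) one_pos (c := z)
    · simpa using this
    · rw [mem_closedBall, dist_eq_norm]
      linarith [norm_sub_le (F y t) (F z t), hMt y hy, hMt z (mem_ball_self one_pos)]
  have hcont : ∀ z, Continuous (F z) := fun z => hc.comp (by fun_prop : Continuous fun t => (z, t))
  borelize E
  have hmeas : Measurable fun t => fderiv ℂ (fun z => F z t) x :=
    (measurable_fderiv_with_param ℂ (f := fun t z => F z t) (hc.comp continuous_swap)).comp
      (measurable_id.prodMk measurable_const)
  exact (intervalIntegral.hasFDerivAt_integral_of_dominated_of_fderiv_le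
    (F' := fun z t => fderiv ℂ (fun z => F z t) z) (bound := fun _ => 2 * M)
    (ball_mem_nhds x one_pos)
    (.of_forall fun z => (hcont z).aestronglyMeasurable) ((hcont x).intervalIntegrable a b)
    hmeas.aestronglyMeasurable (.of_forall hbound) intervalIntegrable_const
    (.of_forall fun t _ z _ => (hd t z).hasFDerivAt)).differentiableAt

/-- Directional derivatives of an entire function of several variables are entire, since Cauchy's
formula on the line `ζ ↦ z + ζ v` expresses them as integrals of translates of `f`. -/
theorem differentiable_fderiv_apply {E : Type*} [NormedAddCommGroup E] [NormedSpace ℂ E]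
    [FiniteDimensional ℂ E] {f : E → ℂ} (hf : Differentiable ℂ f) (v : E) :
    Differentiable ℂ fun z => fderiv ℂ f z v := by
  have key : ∀ z, fderiv ℂ f z v = (2 * Real.pi * I : ℂ)⁻¹ *
      ∫ t in (0 : ℝ)..2 * Real.pi, deriv (circleMap 0 1) t *
        ((circleMap 0 1 t ^ 2)⁻¹ * f (z + circleMap 0 1 t • v)) := by
    intro z
    have hline : Differentiable ℂ fun ζ : ℂ => f (z + ζ • v) := hf.comp (by fun_prop)
    have h1 : deriv (fun ζ : ℂ => f (z + ζ • v)) 0 = fderiv ℂ f z v :=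
      (hf z).lineDeriv_eq_fderiv
    have h2 := two_pi_I_inv_smul_circleIntegral_sub_sq_inv_smul_of_differentiable isOpen_univ
      (subset_univ _) hline.differentiableOn (mem_ball_self (x := (0 : ℂ)) one_pos)
    rw [← h1, ← h2]
    simp [circleIntegral]
  rw [funext key]
  refine (differentiable_parametric_integral _ _ ?_ fun t => ?_).const_mul _
  · have hfc := hf.continuous
    have hne : ∀ t : ℝ, circleMap 0 1 t ^ 2 ≠ 0 := fun t =>
      pow_ne_zero 2 (circleMap_ne_center one_ne_zero)
    simp only [Function.uncurry_def, deriv_circleMap]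
    have := continuous_circleMap 0 1
    have hinv : Continuous fun p : E × ℝ => (circleMap 0 1 p.2 ^ 2)⁻¹ :=
      Continuous.inv₀ (by fun_prop) fun p => hne p.2
    fun_prop
  · exact ((hf.comp (by fun_prop)).const_mul _).const_mul _

/-- **Hadamard's lemma** for entire functions: `f - f w` lies in the ideal generated by the
functions `zᵢ - wᵢ` in the ring of entire functions. -/
theorem exists_hadamard_decomposition {n : ℕ} {f : (Fin n → ℂ) → ℂ} (hf : Differentiable ℂ f)
    (w : Fin n → ℂ) : ∃ g : Fin n → (Fin n → ℂ) → ℂ, (∀ i, Differentiable ℂ (g i)) ∧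
      ∀ z, f z = f w + ∑ i, (z i - w i) * g i z := by
  let D : Fin n → (Fin n → ℂ) → ℂ := fun i z => fderiv ℂ f z (Pi.single i 1)
  have hD : ∀ i, Differentiable ℂ (D i) := fun i => differentiable_fderiv_apply hf _
  have hDc : ∀ i, Continuous (D i) := fun i => (hD i).continuous
  refine ⟨fun i z => ∫ t in (0 : ℝ)..1, D i (w + (t : ℂ) • (z - w)), fun i => ?_, fun z => ?_⟩
  · refine differentiable_parametric_integral _ _ ?_ fun t => (hD i).comp (by fun_prop)
    have := hDc i
    simp only [Function.uncurry_def]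
    fun_prop
  · have hderiv : ∀ t : ℝ, HasDerivAt (fun t : ℝ => f (w + (t : ℂ) • (z - w)))
        (∑ i, (z i - w i) * D i (w + (t : ℂ) • (z - w))) t := by
      intro t
      have h1 : HasDerivAt (fun s : ℂ => w + s • (z - w)) (z - w) (t : ℂ) := by
        simpa using ((hasDerivAt_id (t : ℂ)).smul_const (z - w)).const_add w
      have h2 := ((hf _).hasFDerivAt.comp_hasDerivAt (t : ℂ) h1).comp_ofReal
      have h3 : fderiv ℂ f (w + (t : ℂ) • (z - w)) (z - w) =
          ∑ i, (z i - w i) * D i (w + (t : ℂ) • (z - w)) :=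
        (congrArg _ (pi_eq_sum_univ' (z - w))).trans (by simp [D])
      exact h3 ▸ h2
    have hint := intervalIntegral.integral_eq_sub_of_hasDerivAt (a := 0) (b := 1)
      (fun t _ => hderiv t) (Continuous.intervalIntegrable (by fun_prop) _ _)
    rw [intervalIntegral.integral_finsetSum
      fun i _ => Continuous.intervalIntegrable (by fun_prop) _ _] at hint
    simp only [intervalIntegral.integral_const_mul] at hint
    rw [hint]
    simp

end


/-- The ring of entire functions on a complex normed space `E`. -/
def entireAlg (E : Type) [NormedAddCommGroup E] [NormedSpace ℂ E] :
    Subalgebra ℂ (E → ℂ) where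
  carrier := {f | Differentiable ℂ f}
  mul_mem' hf hg := hf.mul hg
  one_mem' := differentiable_const 1
  add_mem' hf hg := hf.add hg
  zero_mem' := differentiable_const 0
  algebraMap_mem' c := differentiable_const c

/-- The `i`-th coordinate function on `ℂⁿ`, as an entire function. -/
def coordFn (n : ℕ) (i : Fin n) : entireAlg (Fin n → ℂ) :=
  ⟨fun z => z i, (ContinuousLinearMap.proj (R := ℂ) (φ := fun _ : Fin n => ℂ) i).differentiable⟩

/-- Every character (ℂ-algebra homomorphism, no continuity assumed)
of the ring of entire functions on `ℂⁿ` is evaluation at the point `w` whose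
coordinates are the values of the character on the coordinate functions. -/
theorem character_of_entire_functions_is_evaluation (n : ℕ)
    (φ : entireAlg (Fin n → ℂ) →ₐ[ℂ] ℂ)
    (w : Fin n → ℂ) (hw : ∀ i : Fin n, w i = φ (coordFn n i)) :
    ∀ f : entireAlg (Fin n → ℂ), φ f = (f : (Fin n → ℂ) → ℂ) w := by
  intro f
  obtain ⟨g, hg, hfg⟩ := exists_hadamard_decomposition f.2 w
  have hdecomp : f = algebraMap ℂ _ ((f : (Fin n → ℂ) → ℂ) w) +
      ∑ i, (coordFn n i - algebraMap ℂ _ (w i)) * (⟨g i, hg i⟩ : entireAlg (Fin n → ℂ)) := by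
    apply Subtype.ext
    funext z
    simpa [coordFn] using hfg z
  have h := congrArg φ hdecomp
  simpa only [map_add, map_sum, map_mul, map_sub, AlgHom.commutes, Algebra.algebraMap_self,
    RingHom.id_apply, ← hw, sub_self, zero_mul, Finset.sum_const_zero, add_zero] using h
end
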